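/- arXiv:2303.03807 — 7 statements merged into one kernel-verified Lean document; each statement's English description precedes it below -/
import Mathlib

section
/- Let X be a totally disconnected compact metrizable space and let σ : X → X be a local homeomorphism. Then there exists a partition P of X such that for every Z ∈ P the restriction of σ to Z is injective (hence a homeomorphism onto its image), and moreover σ(Z) is a clopen subset of X for every Z ∈ P. -/
open Set

section Prelim

variable {X : Type*}

/-- A (finite clopen) partition of the space `X`: a finite family of nonempty, pairwise
disjoint clopen subsets of `X` whose union is `X`. -/
def IsClopenPartition [TopologicalSpace X] (P : Set (Set X)) : Prop :=
  P.Finite ∧ (∀ Z ∈ P, Z.Nonempty) ∧ (∀ Z ∈ P, IsClopen Z) ∧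
    P.PairwiseDisjoint id ∧ ⋃₀ P = Set.univ

/-- The cardinality of the fiber `σ⁻¹({x})`. -/
noncomputable def fiberCard (σ : X → X) (x : X) : ℕ :=
  (σ ⁻¹' {x}).ncard

/-- `U_{≥ k}`: the set of points with at least `k` preimages. -/
def fiberGE (σ : X → X) (k : ℕ) : Set X :=
  {x : X | k ≤ fiberCard σ x}

/-- `N(σ) = sup_{x ∈ X} |σ⁻¹({x})|`. -/
noncomputable def Nsigma (σ : X → X) : ℕ :=
  sSup (Set.range (fiberCard σ))

/-- The partition `P^σ`, whose members are the nonempty sets of the form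
`σ(Z₁) ∩ ⋯ ∩ σ(Z_k) \ U_{≥ k+1}` for pairwise distinct `Z₁, …, Z_k ∈ P` and
`1 ≤ k ≤ N(σ)`. -/
noncomputable def sigmaPart (σ : X → X) (P : Set (Set X)) : Set (Set X) :=
  {T | ∃ k : ℕ, 1 ≤ k ∧ k ≤ Nsigma σ ∧ ∃ Z : Fin k → Set X,
      (∀ j, Z j ∈ P) ∧ Function.Injective Z ∧
      T = (⋂ j, σ '' Z j) \ fiberGE σ (k + 1) ∧ T.Nonempty}

/-- The partition `σ⁻¹(P) = {σ⁻¹(Z) : Z ∈ P}`. -/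
def preimagePart (σ : X → X) (P : Set (Set X)) : Set (Set X) :=
  (fun Z => σ ⁻¹' Z) '' P

/-- `P₁ ≼ P₂`: `P₂` is finer than `P₁`, i.e. every member of `P₂` is contained in a
member of `P₁`. -/
def Finer (P₁ P₂ : Set (Set X)) : Prop :=
  ∀ Z ∈ P₂, ∃ Z' ∈ P₁, Z ⊆ Z'

/-- The wedge `P₁ ∨ P₂ = {Z₁ ∩ Z₂ ≠ ∅ : Z₁ ∈ P₁, Z₂ ∈ P₂}`. -/
def wedgePart (P₁ P₂ : Set (Set X)) : Set (Set X) :=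
  {T | ∃ Z₁ ∈ P₁, ∃ Z₂ ∈ P₂, T = Z₁ ∩ Z₂ ∧ T.Nonempty}

/-- A σ-refined sequence of partitions, with respect to a fixed distance function `d`
inducing the topology:  (a) `σ` is injective on each member of `P 0`; (b) each `P (n+1)`
refines `P n`; (c) `⋃ n, P n` generates the topology of `X`; (d) the diameters of the
members of `P n` tend to `0`; (e) `P (2j) ∨ P (2j)^σ ≼ P (2j+1)` and
`P (2j+1) ∨ σ⁻¹(P (2j+1)) ≼ P (2j+2)`. -/
noncomputable def IsSigmaRefinedSeq [t : TopologicalSpace X] (d : X → X → ℝ) (σ : X → X)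
    (P : ℕ → Set (Set X)) : Prop :=
  (∀ n, IsClopenPartition (P n)) ∧
  (∀ Z ∈ P 0, Set.InjOn σ Z) ∧
  (∀ n, Finer (P n) (P (n + 1))) ∧
  t = TopologicalSpace.generateFrom (⋃ n, P n) ∧
  (∀ ε : ℝ, 0 < ε → ∃ N : ℕ, ∀ n, N ≤ n → ∀ Z ∈ P n, ∀ x ∈ Z, ∀ y ∈ Z, d x y < ε) ∧
  (∀ j : ℕ, Finer (wedgePart (P (2 * j)) (sigmaPart σ (P (2 * j)))) (P (2 * j + 1))) ∧
  (∀ j : ℕ, Finer (wedgePart (P (2 * j + 1)) (preimagePart σ (P (2 * j + 1))))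
      (P (2 * j + 2)))

end Prelim

/-!
Points of a profinite space have arbitrarily small clopen neighbourhoods, so a map injective near
each point is injective on every member of some clopen partition. The images of the members are
open because a local homeomorphism is an open map, and closed because they are compact.
-/

section ClopenPartition

open TopologicalSpace Function

variable {X : Type*} [TopologicalSpace X]

theorem isClopenPartition_range_coe {ι : Type*} [Finite ι] {W : ι → Clopens X}
    (hne : ∀ i, W i ≠ ⊥) (hcover : ⋃ i, (W i : Set X) = univ) (hdisj : Pairwise (Disjoint on W)) :
    IsClopenPartition (range fun i ↦ (W i : Set X)) := by
  refine ⟨finite_range _, ?nonempty, ?clopen, ?disjoint, by rwa [sUnion_range]⟩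
  case nonempty =>
    rintro _ ⟨i, rfl⟩
    rw [nonempty_iff_ne_empty, ← Clopens.coe_bot]
    exact SetLike.coe_ne_coe.2 (hne i)
  case clopen =>
    rintro _ ⟨i, rfl⟩
    exact (W i).isClopen
  case disjoint =>
    exact Pairwise.range_pairwise fun i j hij ↦ Clopens.coe_disjoint.2 (hdisj hij)

variable [CompactSpace X] [T2Space X] [TotallyDisconnectedSpace X]

theorem exists_isClopenPartition_subset_of_isOpenCover {ι : Type*} {U : ι → Opens X}
    (hU : IsOpenCover U) :
    ∃ P : Set (Set X), IsClopenPartition P ∧ ∀ Z ∈ P, ∃ i, Z ⊆ U i := by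
  obtain ⟨n, W, hW, hcover, hdisj⟩ := hU.exists_finite_nonempty_disjoint_clopen_cover
  exact ⟨range fun j ↦ (W j : Set X),
    isClopenPartition_range_coe (fun j ↦ (hW j).1) (univ_subset_iff.1 hcover) hdisj,
    forall_mem_range.2 fun j ↦ (hW j).2⟩

theorem exists_isClopenPartition_injOn {Y : Type*} {f : X → Y} (hf : IsLocallyInjective f) :
    ∃ P : Set (Set X), IsClopenPartition P ∧ ∀ Z ∈ P, InjOn f Z := by
  choose U hUopen hmem hinj using hf
  have hU : IsOpenCover fun x ↦ (⟨U x, hUopen x⟩ : Opens X) :=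
    .of_sets hUopen (iUnion_eq_univ_iff.2 fun x ↦ ⟨x, hmem x⟩)
  obtain ⟨P, hP, hsub⟩ := exists_isClopenPartition_subset_of_isOpenCover hU
  refine ⟨P, hP, fun Z hZ ↦ ?_⟩
  obtain ⟨x, hZx⟩ := hsub Z hZ
  exact (hinj x).mono hZx

theorem stmt0_general {Y : Type*} [TopologicalSpace Y] [T2Space Y] {f : X → Y}
    (hf : IsLocalHomeomorph f) :
    ∃ P : Set (Set X), IsClopenPartition P ∧
      (∀ Z ∈ P, InjOn f Z) ∧ (∀ Z ∈ P, IsClopen (f '' Z)) := by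
  obtain ⟨P, hP, hinj⟩ := exists_isClopenPartition_injOn hf.isLocallyInjective
  have hclopen : ∀ Z ∈ P, IsClopen Z := hP.2.2.1
  exact ⟨P, hP, hinj, fun Z hZ ↦
    ⟨hf.continuous.isClosedMap Z (hclopen Z hZ).isClosed, hf.isOpenMap Z (hclopen Z hZ).isOpen⟩⟩

end ClopenPartition

/-- Every local homeomorphism `σ` of a totally disconnected compact metrizable space `X`
admits a partition `P` of `X` such that `σ` is injective (hence a homeomorphism onto its
image) on each member of `P`, and `σ(Z)` is clopen for every `Z ∈ P`. -/
theorem stmt0 {X : Type*} [TopologicalSpace X] [CompactSpace X]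
    [TopologicalSpace.MetrizableSpace X] [TotallyDisconnectedSpace X]
    (σ : X → X) (hσ : IsLocalHomeomorph σ) :
    ∃ P : Set (Set X), IsClopenPartition P ∧
      (∀ Z ∈ P, Set.InjOn σ Z) ∧ (∀ Z ∈ P, IsClopen (σ '' Z)) :=
  stmt0_general hσ
end

section
/- Let X be a totally disconnected compact metrizable space and let σ : X → X be a surjective local homeomorphism. Then for every i ≥ 1 the set U_{≥i} := {x ∈ X : |σ⁻¹({x})| ≥ i} is clopen in X. Consequently each set U_i := {x ∈ X : |σ⁻¹({x})| = i} is clopen, and the sets U_1, …, U_{N(σ)} are pairwise disjoint and cover X. -/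
open Set

/-!
A local homeomorphism from a compact Hausdorff space to a Hausdorff space is a covering map. Over
an evenly covered neighborhood all fibers are in bijection, so the fiber cardinality is locally
constant; its level and superlevel sets are then clopen, and by compactness it is bounded.
-/

open Topology

section Covering

variable {E X : Type*} [TopologicalSpace E] [TopologicalSpace X] {f : E → X}

theorem eventually_isEvenlyCovered {I : Type*} [TopologicalSpace I] {x : X}
    (hx : IsEvenlyCovered f x I) : ∀ᶠ y in 𝓝 x, IsEvenlyCovered f y I := by
  obtain ⟨hI, U, hxU, hU, hfU, hH⟩ := hx
  filter_upwards [hU.mem_nhds hxU] with y hyU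
  exact ⟨hI, U, hyU, hU, hfU, hH⟩

theorem isLocallyConstant_ncard_fiber (hf : IsCoveringMap f) :
    IsLocallyConstant fun x ↦ (f ⁻¹' {x}).ncard := by
  rw [IsLocallyConstant.iff_eventually_eq]
  intro x
  filter_upwards [eventually_isEvenlyCovered (hf x)] with y hy
  exact (Set.ncard_congr' hy.fiberHomeomorph.toEquiv).symm

theorem finite_fiber_of_isLocalHomeomorph [CompactSpace E] [T1Space X] (hf : IsLocalHomeomorph f)
    (x : X) : (f ⁻¹' {x}).Finite := by
  have image_fiber_discrete : IsDiscrete (f '' (f ⁻¹' {x})) :=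
    (subsingleton_singleton.anti (image_preimage_subset f {x})).isDiscrete
  have fiber_discrete : IsDiscrete (f ⁻¹' {x}) :=
    (hf.isLocalHomeomorphOn.mono (subset_univ _)).isDiscrete_of_image image_fiber_discrete
  exact (isClosed_singleton.preimage hf.continuous).isCompact.finite fiber_discrete

end Covering

theorem isClopen_preimage_of_isLocallyConstant {X Y : Type*} [TopologicalSpace X] {f : X → Y}
    (hf : IsLocallyConstant f) (s : Set Y) : IsClopen (f ⁻¹' s) :=
  ⟨⟨hf sᶜ⟩, hf s⟩

theorem iUnion_Icc_sSup_range_fiber_eq_univ {α : Type*} {g : α → ℕ} {m : ℕ}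
    (hm : ∀ a, m ≤ g a) (hg : BddAbove (range g)) :
    ⋃ i ∈ Finset.Icc m (sSup (range g)), {a | g a = i} = univ := by
  refine eq_univ_of_forall fun a ↦ mem_iUnion₂.mpr ⟨g a, ?_, rfl⟩
  exact Finset.mem_Icc.mpr ⟨hm a, le_csSup hg (mem_range_self a)⟩

theorem stmt2_general {X : Type*} [TopologicalSpace X] [CompactSpace X] [T2Space X]
    (σ : X → X) (hσ : IsLocalHomeomorph σ) (hsurj : Function.Surjective σ) :
    (∀ i : ℕ, IsClopen (fiberGE σ i)) ∧
      (∀ i : ℕ, IsClopen {x : X | fiberCard σ x = i}) ∧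
      (∀ i j : ℕ, i ≠ j →
        Disjoint {x : X | fiberCard σ x = i} {x : X | fiberCard σ x = j}) ∧
      (⋃ i ∈ Finset.Icc 1 (Nsigma σ), {x : X | fiberCard σ x = i}) = Set.univ := by
  have card_locallyConstant : IsLocallyConstant (fiberCard σ) :=
    isLocallyConstant_ncard_fiber (isLocalHomeomorph_iff_isCoveringMap.mp hσ)
  have card_pos (x : X) : 1 ≤ fiberCard σ x :=
    (ncard_pos (finite_fiber_of_isLocalHomeomorph hσ x)).mpr (hsurj x)
  exact ⟨fun i ↦ isClopen_preimage_of_isLocallyConstant card_locallyConstant (Ici i),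
    card_locallyConstant.isClopen_fiber,
    fun _ _ hij ↦ pairwise_disjoint_fiber (fiberCard σ) hij,
    iUnion_Icc_sSup_range_fiber_eq_univ card_pos card_locallyConstant.range_finite.bddAbove⟩

/-- For a surjective local homeomorphism `σ` of a totally disconnected compact metrizable
space, each `U_{≥i} = {x : |σ⁻¹({x})| ≥ i}` (for `i ≥ 1`) is clopen; consequently each
`U_i = {x : |σ⁻¹({x})| = i}` is clopen, and `U_1, …, U_{N(σ)}` are pairwise disjoint and
cover `X`. -/
theorem stmt2 {X : Type*} [TopologicalSpace X] [CompactSpace X]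
    [TopologicalSpace.MetrizableSpace X] [TotallyDisconnectedSpace X]
    (σ : X → X) (hσ : IsLocalHomeomorph σ) (hsurj : Function.Surjective σ) :
    (∀ i : ℕ, 1 ≤ i → IsClopen (fiberGE σ i)) ∧
      (∀ i : ℕ, 1 ≤ i → IsClopen {x : X | fiberCard σ x = i}) ∧
      (∀ i j : ℕ, i ≠ j →
        Disjoint {x : X | fiberCard σ x = i} {x : X | fiberCard σ x = j}) ∧
      (⋃ i ∈ Finset.Icc 1 (Nsigma σ), {x : X | fiberCard σ x = i}) = Set.univ := by
  obtain ⟨clopen_ge, clopen_eq, disjoint_and_cover⟩ := stmt2_general σ hσ hsurj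
  exact ⟨fun i _ ↦ clopen_ge i, fun i _ ↦ clopen_eq i, disjoint_and_cover⟩
end

section
/- Let X be a totally disconnected compact metrizable space, σ : X → X a surjective local homeomorphism, and P a partition of X such that σ is injective on each element of P. Then P^σ is a partition of X: its elements are nonempty, pairwise disjoint clopen subsets of X whose union is X. -/
open Set

/-!
To each point `x` attach the set of members of `P` whose image under `σ` contains `x`. Since `σ` is
injective on each member of `P`, this set has exactly as many elements as the fibre over `x`.
Hence removing `U_{≥ k+1}` from `σ(Z₁) ∩ ⋯ ∩ σ(Z_k)` leaves the points whose attached set is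
exactly `{Z₁, …, Z_k}`, so `P^σ` is the partition of `X` into the fibres of this assignment.
The assignment takes finitely many values, and it is locally constant because the images `σ(Z)`
are clopen.
-/

section ImageCells

variable {X Y : Type*} {f : X → Y} {P : Set (Set X)}

/-- The members of the family `P` whose image under `f` contains `y`. For `f = σ`, the members of
`P^σ` are the fibres of this map (`sigmaPart_eq_classes_ker_imageCells`). -/
def imageCells (f : X → Y) (P : Set (Set X)) (y : Y) : Set (Set X) :=
  {Z ∈ P | y ∈ f '' Z}

theorem imageCells_subset (f : X → Y) (P : Set (Set X)) (y : Y) : imageCells f P y ⊆ P :=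
  sep_subset P _

theorem finite_range_imageCells (f : X → Y) (hfin : P.Finite) : (range (imageCells f P)).Finite :=
  hfin.finite_subsets.subset (range_subset_iff.2 (imageCells_subset f P))

theorem imageCells_apply_nonempty (f : X → Y) (hcover : ⋃₀ P = univ) (x : X) :
    (imageCells f P (f x)).Nonempty := by
  obtain ⟨Z, hZ, hxZ⟩ := sUnion_eq_univ_iff.1 hcover x
  exact ⟨Z, hZ, mem_image_of_mem f hxZ⟩

theorem ncard_imageCells (hdisj : P.PairwiseDisjoint id) (hcover : ⋃₀ P = univ)
    (hinj : ∀ Z ∈ P, InjOn f Z) (y : Y) :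
    (imageCells f P y).ncard = (f ⁻¹' {y}).ncard := by
  choose cell cell_mem mem_cell using sUnion_eq_univ_iff.1 hcover
  have imageCells_eq : imageCells f P y = cell '' (f ⁻¹' {y}) := by
    ext Z
    constructor
    · rintro ⟨hZ, x, hxZ, hxy⟩
      exact ⟨x, hxy, hdisj.elim_set (cell_mem x) hZ x (mem_cell x) hxZ⟩
    · rintro ⟨x, hxy, rfl⟩
      exact ⟨cell_mem x, x, mem_cell x, hxy⟩
  have cell_injOn : InjOn cell (f ⁻¹' {y}) := fun a ha b hb hab =>
    hinj (cell a) (cell_mem a) (mem_cell a) (hab ▸ mem_cell b) (Eq.trans ha (Eq.symm hb))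
  rw [imageCells_eq, cell_injOn.ncard_image]

theorem isLocallyConstant_imageCells [TopologicalSpace Y] (hfin : P.Finite)
    (himage : ∀ Z ∈ P, IsClopen (f '' Z)) : IsLocallyConstant (imageCells f P) := by
  refine (IsLocallyConstant.iff_eventually_eq _).2 fun y => ?_
  have mem_image_iff : ∀ Z ∈ P, ∀ᶠ z in nhds y, (z ∈ f '' Z ↔ y ∈ f '' Z) := by
    intro Z hZ
    by_cases hy : y ∈ f '' Z
    · filter_upwards [(himage Z hZ).isOpen.mem_nhds hy] with z hz
      exact iff_of_true hz hy
    · filter_upwards [(himage Z hZ).compl.isOpen.mem_nhds hy] with z hz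
      exact iff_of_false hz hy
  filter_upwards [hfin.eventually_all.2 mem_image_iff] with z hz
  exact sep_ext_iff.2 hz

end ImageCells

theorem isClopenPartition_classes_ker {X α : Type*} [TopologicalSpace X] {g : X → α}
    (hg : IsLocallyConstant g) (hfin : (range g).Finite) :
    IsClopenPartition (Setoid.ker g).classes := by
  have hpart := Setoid.isPartition_classes (Setoid.ker g)
  refine ⟨?_, fun _ => Setoid.nonempty_of_mem_partition hpart, ?_, hpart.pairwiseDisjoint,
    hpart.sUnion_eq_univ⟩
  · refine (hfin.image fun a => {x | g x = a}).subset ?_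
    rintro _ ⟨y, rfl⟩
    exact ⟨g y, mem_range_self y, rfl⟩
  · rintro _ ⟨y, rfl⟩
    exact hg.isClopen_fiber (g y)

section SigmaPart

variable {X : Type*} {σ : X → X} {P : Set (Set X)}

theorem bddAbove_range_fiberCard (hfin : P.Finite) (hdisj : P.PairwiseDisjoint id)
    (hcover : ⋃₀ P = univ) (hinj : ∀ Z ∈ P, InjOn σ Z) : BddAbove (range (fiberCard σ)) := by
  refine ⟨P.ncard, forall_mem_range.2 fun x => ?_⟩
  rw [fiberCard, ← ncard_imageCells hdisj hcover hinj]
  exact ncard_le_ncard (imageCells_subset σ P x) hfin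

theorem iInter_image_diff_fiberGE_eq (hfin : P.Finite) (hdisj : P.PairwiseDisjoint id)
    (hcover : ⋃₀ P = univ) (hinj : ∀ Z ∈ P, InjOn σ Z) {k : ℕ} {Z : Fin k → Set X}
    (hZ : ∀ j, Z j ∈ P) (hZinj : Function.Injective Z) :
    (⋂ j, σ '' Z j) \ fiberGE σ (k + 1) = {x | imageCells σ P x = range Z} := by
  ext x
  have mem_iInter_iff : x ∈ ⋂ j, σ '' Z j ↔ range Z ⊆ imageCells σ P x := by
    simp [range_subset_iff, imageCells, hZ]
  have notMem_fiberGE_iff : x ∉ fiberGE σ (k + 1) ↔ (imageCells σ P x).ncard ≤ k := by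
    rw [ncard_imageCells hdisj hcover hinj, fiberGE, mem_ofPred_eq, fiberCard, not_le,
      Nat.lt_succ_iff]
  have ncard_range : (range Z).ncard = k := by
    rw [ncard_range_of_injective hZinj, Nat.card_fin]
  rw [mem_sdiff, mem_iInter_iff, notMem_fiberGE_iff, mem_ofPred_eq]
  constructor
  · rintro ⟨hsub, hcard⟩
    have hfin_cells := hfin.subset (imageCells_subset σ P x)
    exact (eq_of_subset_of_ncard_le hsub (hcard.trans ncard_range.ge) hfin_cells).symm
  · intro hx
    exact ⟨hx.ge, hx ▸ ncard_range.le⟩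

theorem sigmaPart_eq_classes_ker_imageCells (hfin : P.Finite) (hdisj : P.PairwiseDisjoint id)
    (hcover : ⋃₀ P = univ) (hinj : ∀ Z ∈ P, InjOn σ Z) (hsurj : Function.Surjective σ) :
    sigmaPart σ P = (Setoid.ker (imageCells σ P)).classes := by
  ext T
  constructor
  · rintro ⟨k, -, -, Z, hZ, hZinj, rfl, x, hx⟩
    rw [iInter_image_diff_fiberGE_eq hfin hdisj hcover hinj hZ hZinj] at hx ⊢
    rw [← hx]
    exact Setoid.mem_classes _ x
  · rintro ⟨x, rfl⟩
    have hfin_cells := hfin.subset (imageCells_subset σ P x)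
    obtain ⟨k, Z, hZinj, hrange⟩ := hfin_cells.fin_param
    have hZ : ∀ j, Z j ∈ P := range_subset_iff.1 (hrange.trans_subset (imageCells_subset σ P x))
    have hk : (imageCells σ P x).ncard = k := by
      rw [← hrange, ncard_range_of_injective hZinj, Nat.card_fin]
    have one_le_k : 1 ≤ k := by
      obtain ⟨y, rfl⟩ := hsurj x
      exact hk ▸ (ncard_pos hfin_cells).2 (imageCells_apply_nonempty σ hcover y)
    have k_le_Nsigma : k ≤ Nsigma σ := by
      rw [← hk, ncard_imageCells hdisj hcover hinj]
      exact le_csSup (bddAbove_range_fiberCard hfin hdisj hcover hinj) (mem_range_self x)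
    refine ⟨k, one_le_k, k_le_Nsigma, Z, hZ, hZinj, ?_, x, rfl⟩
    rw [iInter_image_diff_fiberGE_eq hfin hdisj hcover hinj hZ hZinj, hrange]
    rfl

theorem stmt4_general [TopologicalSpace X] (hopen : IsOpenMap σ) (hclosed : IsClosedMap σ)
    (hsurj : Function.Surjective σ) (hP : IsClopenPartition P) (hinj : ∀ Z ∈ P, InjOn σ Z) :
    IsClopenPartition (sigmaPart σ P) := by
  obtain ⟨hfin, -, hclopen, hdisj, hcover⟩ := hP
  have himage : ∀ Z ∈ P, IsClopen (σ '' Z) := fun Z hZ =>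
    ⟨hclosed Z (hclopen Z hZ).isClosed, hopen Z (hclopen Z hZ).isOpen⟩
  rw [sigmaPart_eq_classes_ker_imageCells hfin hdisj hcover hinj hsurj]
  exact isClopenPartition_classes_ker (isLocallyConstant_imageCells hfin himage)
    (finite_range_imageCells σ hfin)

end SigmaPart

/-- `P^σ` is a partition of `X`: its members are nonempty, pairwise disjoint clopen
subsets of `X` whose union is `X`. -/
theorem stmt4 {X : Type*} [TopologicalSpace X] [CompactSpace X]
    [TopologicalSpace.MetrizableSpace X] [TotallyDisconnectedSpace X]
    (σ : X → X) (hσ : IsLocalHomeomorph σ) (hsurj : Function.Surjective σ)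
    (P : Set (Set X)) (hP : IsClopenPartition P)
    (hinj : ∀ Z ∈ P, Set.InjOn σ Z) :
    IsClopenPartition (sigmaPart σ P) :=
  stmt4_general hσ.isOpenMap hσ.continuous.isClosedMap hsurj hP hinj
end

section
/- Let X be a totally disconnected compact metrizable space and σ : X → X a surjective local homeomorphism. Then X admits a σ-refined sequence of partitions. -/
open Set

/-!
Call a family of sets a neighbourhood cover if each point has a neighbourhood belonging to it. In a
compact totally disconnected Hausdorff space every neighbourhood cover is refined by a clopen
partition, so it is enough to see that each family to be refined is a neighbourhood cover. The only
delicate one is `P^σ`. When `σ` is injective on the members of the partition `P`, the fibre over `y`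
has as many points as there are members of `P` whose image contains `y`. The set of these members is
locally constant in `y`, since images of clopen sets are clopen, and the points sharing it with a
given `x` lie in a single member of `P^σ`. Refining `P ∨ P^σ`, `P ∨ σ⁻¹(P)` and the small sets at
every step makes the parity of the index irrelevant.
-/

open scoped Topology

theorem exists_seq_of_forall_exists_rel {α : Type*} {p : α → Prop} {r : ℕ → α → α → Prop}
    (hzero : ∃ a, p a) (hsucc : ∀ n a, p a → ∃ b, p b ∧ r n a b) :
    ∃ u : ℕ → α, (∀ n, p (u n)) ∧ ∀ n, r n (u n) (u (n + 1)) := by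
  obtain ⟨a₀, ha₀⟩ := hzero
  choose next hnext hrel using hsucc
  let u : ℕ → {a // p a} := Nat.rec ⟨a₀, ha₀⟩ fun n a ↦ ⟨next n a a.2, hnext n a a.2⟩
  exact ⟨fun n ↦ (u n).1, fun n ↦ (u n).2, fun n ↦ hrel n (u n).1 (u n).2⟩

namespace Finer

variable {X : Type*} {P P₁ P₂ Q : Set (Set X)}

theorem of_wedgePart_left (h : Finer (wedgePart P₁ P₂) Q) : Finer P₁ Q := by
  intro Z hZ
  obtain ⟨_, ⟨Z₁, hZ₁, Z₂, -, rfl, -⟩, hsub⟩ := h Z hZ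
  exact ⟨Z₁, hZ₁, hsub.trans inter_subset_left⟩

theorem of_wedgePart_right (h : Finer (wedgePart P₁ P₂) Q) : Finer P₂ Q := by
  intro Z hZ
  obtain ⟨_, ⟨Z₁, -, Z₂, hZ₂, rfl, -⟩, hsub⟩ := h Z hZ
  exact ⟨Z₂, hZ₂, hsub.trans inter_subset_right⟩

theorem forall_of_antitone {p : Set X → Prop} (h : Finer P Q) (hp : Antitone p)
    (hP : ∀ Z ∈ P, p Z) : ∀ Z ∈ Q, p Z := by
  intro Z hZ
  obtain ⟨Z', hZ', hsub⟩ := h Z hZ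
  exact hp hsub (hP Z' hZ')

end Finer

section NhdsCover

variable {X Y : Type*} [TopologicalSpace X]

/-- A family of sets is a neighbourhood cover if every point has a neighbourhood belonging to it,
i.e. if the interiors of its members cover the space. The members themselves need not be open. -/
def IsNhdsCover (C : Set (Set X)) : Prop :=
  ∀ x, ∃ T ∈ C, T ∈ 𝓝 x

namespace IsNhdsCover

variable {C D : Set (Set X)}

protected theorem wedgePart (hC : IsNhdsCover C) (hD : IsNhdsCover D) :
    IsNhdsCover (wedgePart C D) := by
  intro x
  obtain ⟨S, hS, hxS⟩ := hC x
  obtain ⟨T, hT, hxT⟩ := hD x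
  have hx : S ∩ T ∈ 𝓝 x := Filter.inter_mem hxS hxT
  exact ⟨S ∩ T, ⟨S, hS, T, hT, rfl, x, mem_of_mem_nhds hx⟩, hx⟩

protected theorem preimagePart {σ : X → X} (hσ : Continuous σ) (hC : IsNhdsCover C) :
    IsNhdsCover (preimagePart σ C) := by
  intro x
  obtain ⟨T, hT, hxT⟩ := hC (σ x)
  exact ⟨σ ⁻¹' T, mem_image_of_mem _ hT, hσ.continuousAt hxT⟩

open TopologicalSpace in
theorem exists_isClopenPartition_finer [T2Space X] [CompactSpace X] [TotallyDisconnectedSpace X]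
    (hC : IsNhdsCover C) : ∃ P, IsClopenPartition P ∧ Finer C P := by
  have hopen : IsOpenCover fun T : C ↦ (⟨interior T.1, isOpen_interior⟩ : Opens X) := by
    refine .of_sets _ (iUnion_eq_univ_iff.2 fun x ↦ ?_)
    obtain ⟨T, hT, hxT⟩ := hC x
    exact ⟨⟨T, hT⟩, mem_interior_iff_mem_nhds.2 hxT⟩
  obtain ⟨n, W, hW, hcover, hdisj⟩ := hopen.exists_finite_nonempty_disjoint_clopen_cover
  refine ⟨range fun j ↦ (W j : Set X), ⟨finite_range _, ?_, ?_, ?_, ?_⟩, ?_⟩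
  · rintro _ ⟨j, rfl⟩
    exact nonempty_iff_ne_empty.2 fun hempty ↦ (hW j).1 (SetLike.coe_injective hempty)
  · rintro _ ⟨j, rfl⟩
    exact (W j).isClopen
  · rintro _ ⟨i, rfl⟩ _ ⟨j, rfl⟩ hne
    have hij : Disjoint (W i) (W j) := hdisj fun hij ↦ hne (by rw [hij])
    simpa [disjoint_iff, ← SetLike.coe_set_eq] using hij
  · rw [sUnion_range]
    exact univ_subset_iff.1 hcover
  · rintro _ ⟨j, rfl⟩
    obtain ⟨T, hT⟩ := (hW j).2
    exact ⟨T, T.2, hT.trans interior_subset⟩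

end IsNhdsCover

theorem isNhdsCover_setOf_injOn {f : X → Y} (hf : IsLocallyInjective f) :
    IsNhdsCover {T | InjOn f T} := by
  intro x
  obtain ⟨U, hU, hinj⟩ := isLocallyInjective_iff_nhds.1 hf x
  exact ⟨U, hinj, hU⟩

namespace IsClopenPartition

variable {P : Set (Set X)}

theorem existsUnique_mem (hP : IsClopenPartition P) (x : X) : ∃! Z, Z ∈ P ∧ x ∈ Z := by
  obtain ⟨-, -, -, hdisj, hcover⟩ := hP
  obtain ⟨Z, hZ, hxZ⟩ := sUnion_eq_univ_iff.1 hcover x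
  exact ⟨Z, ⟨hZ, hxZ⟩, fun Z' hZ' ↦ hdisj.elim_set hZ'.1 hZ x hZ'.2 hxZ⟩

theorem isNhdsCover (hP : IsClopenPartition P) : IsNhdsCover P := by
  intro x
  obtain ⟨Z, hZ, hxZ⟩ := (hP.existsUnique_mem x).exists
  exact ⟨Z, hZ, (hP.2.2.1 Z hZ).isOpen.mem_nhds hxZ⟩

end IsClopenPartition

end NhdsCover

section MembersOver

variable {X Y : Type*}

/-- The members of the family `P` whose image under `f` contains `y`. When `f` is injective on the
members of a partition `P`, they correspond to the points of the fibre of `f` over `y`. -/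
def membersOver (f : X → Y) (P : Set (Set X)) (y : Y) : Set (Set X) :=
  {Z ∈ P | y ∈ f '' Z}

theorem isLocallyConstant_membersOver [TopologicalSpace Y] {f : X → Y} {P : Set (Set X)}
    (hfin : P.Finite) (hclopen : ∀ Z ∈ P, IsClopen (f '' Z)) :
    IsLocallyConstant (membersOver f P) := by
  refine (IsLocallyConstant.iff_eventually_eq _).2 fun x ↦ ?_
  have hiff : ∀ᶠ y in 𝓝 x, ∀ Z ∈ P, (y ∈ f '' Z ↔ x ∈ f '' Z) := by
    refine (Filter.eventually_all_finite hfin).2 fun Z hZ ↦ ?_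
    by_cases hx : x ∈ f '' Z
    · simpa only [hx, iff_true] using (hclopen Z hZ).isOpen.eventually_mem hx
    · simpa only [hx, iff_false, mem_compl_iff] using (hclopen Z hZ).compl.isOpen.eventually_mem hx
  filter_upwards [hiff] with y hy
  exact Set.ext fun Z ↦ and_congr_right (hy Z)

variable {P : Set (Set X)}

theorem membersOver_nonempty {f : X → Y} (hP : ∀ x, ∃ Z ∈ P, x ∈ Z)
    (hf : Function.Surjective f) (y : Y) : (membersOver f P y).Nonempty := by
  obtain ⟨x, rfl⟩ := hf y
  obtain ⟨Z, hZ, hxZ⟩ := hP x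
  exact ⟨Z, hZ, mem_image_of_mem f hxZ⟩

theorem ncard_preimage_singleton_eq_ncard_membersOver {f : X → Y}
    (hP : ∀ x, ∃! Z, Z ∈ P ∧ x ∈ Z) (hinj : ∀ Z ∈ P, InjOn f Z) (y : Y) :
    (f ⁻¹' {y}).ncard = (membersOver f P y).ncard := by
  choose memberOf hmem huniq using hP
  refine ncard_congr (fun x _ ↦ memberOf x) ?_ ?_ ?_
  · exact fun x hx ↦ ⟨(hmem x).1, x, (hmem x).2, hx⟩
  · intro x x' hx hx' heq
    have hx'_mem : x' ∈ memberOf x := heq ▸ (hmem x').2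
    exact hinj _ (hmem x).1 (hmem x).2 hx'_mem (hx.trans hx'.symm)
  · rintro Z ⟨hZ, x, hxZ, hx⟩
    exact ⟨x, hx, (huniq x Z ⟨hZ, hxZ⟩).symm⟩

variable {σ : X → X}

theorem fiberCard_le_Nsigma (hfin : P.Finite) (hP : ∀ x, ∃! Z, Z ∈ P ∧ x ∈ Z)
    (hinj : ∀ Z ∈ P, InjOn σ Z) (x : X) : fiberCard σ x ≤ Nsigma σ := by
  refine le_csSup ⟨P.ncard, ?_⟩ (mem_range_self x)
  rintro _ ⟨y, rfl⟩
  exact (ncard_preimage_singleton_eq_ncard_membersOver hP hinj y).trans_le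
    (ncard_le_ncard (sep_subset _ _) hfin)

theorem exists_mem_sigmaPart_superset (hfin : P.Finite) (hP : ∀ x, ∃! Z, Z ∈ P ∧ x ∈ Z)
    (hinj : ∀ Z ∈ P, InjOn σ Z) (hsurj : Function.Surjective σ) (x : X) :
    ∃ T ∈ sigmaPart σ P, {y | membersOver σ P y = membersOver σ P x} ⊆ T := by
  have hcard : ∀ y, fiberCard σ y = (membersOver σ P y).ncard :=
    ncard_preimage_singleton_eq_ncard_membersOver hP hinj
  have hfin_x : (membersOver σ P x).Finite := hfin.subset (sep_subset _ _)
  have hpos : 1 ≤ (membersOver σ P x).ncard :=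
    (ncard_pos hfin_x).2 (membersOver_nonempty (fun x ↦ (hP x).exists) hsurj x)
  have hle : (membersOver σ P x).ncard ≤ Nsigma σ :=
    hcard x ▸ fiberCard_le_Nsigma hfin hP hinj x
  have : Finite (membersOver σ P x) := hfin_x
  let Z : Fin (membersOver σ P x).ncard ≃ membersOver σ P x :=
    (Finite.equivFinOfCardEq rfl).symm
  have hsub : {y | membersOver σ P y = membersOver σ P x} ⊆
      (⋂ j, σ '' (Z j : Set X)) \ fiberGE σ ((membersOver σ P x).ncard + 1) := by
    intro y (hy : membersOver σ P y = membersOver σ P x)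
    have hmem : ∀ j, (Z j : Set X) ∈ membersOver σ P y := fun j ↦ by
      rw [hy]
      exact (Z j).2
    have hnotMem : y ∉ fiberGE σ ((membersOver σ P x).ncard + 1) := by
      simp [fiberGE, hcard, hy]
    exact ⟨mem_iInter.2 fun j ↦ (hmem j).2, hnotMem⟩
  exact ⟨_, ⟨_, hpos, hle, fun j ↦ Z j, fun j ↦ (Z j).2.1,
    Subtype.val_injective.comp Z.injective, rfl, x, hsub rfl⟩, hsub⟩

theorem isNhdsCover_sigmaPart [TopologicalSpace X] [T2Space X] [CompactSpace X]
    (hσ : Continuous σ) (hopen : IsOpenMap σ) (hsurj : Function.Surjective σ)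
    (hP : IsClopenPartition P) (hinj : ∀ Z ∈ P, InjOn σ Z) : IsNhdsCover (sigmaPart σ P) := by
  intro x
  have hclopen : ∀ Z ∈ P, IsClopen (σ '' Z) := fun Z hZ ↦
    ⟨hσ.isClosedMap Z (hP.2.2.1 Z hZ).isClosed, hopen Z (hP.2.2.1 Z hZ).isOpen⟩
  obtain ⟨T, hT, hsub⟩ := exists_mem_sigmaPart_superset hP.1 hP.existsUnique_mem hinj hsurj x
  exact ⟨T, hT, Filter.mem_of_superset
    ((isLocallyConstant_membersOver hP.1 hclopen).eventually_eq x) hsub⟩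

end MembersOver

section Mesh

variable {X : Type*} [PseudoMetricSpace X]

/-- All distances between points of `T` are less than `ε`. This is the form in which the mesh
condition of `IsSigmaRefinedSeq` bounds the diameters of the members of a partition. -/
def DistLT (ε : ℝ) (T : Set X) : Prop :=
  ∀ x ∈ T, ∀ y ∈ T, dist x y < ε

theorem antitone_distLT (ε : ℝ) : Antitone (DistLT ε : Set X → Prop) :=
  fun _ _ hsub hT x hx y hy ↦ hT x (hsub hx) y (hsub hy)

theorem isNhdsCover_setOf_distLT {ε : ℝ} (hε : 0 < ε) : IsNhdsCover {T : Set X | DistLT ε T} := by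
  refine fun x ↦ ⟨Metric.ball x (ε / 2), fun y hy z hz ↦ ?_, Metric.ball_mem_nhds x (half_pos hε)⟩
  calc dist y z ≤ dist y x + dist z x := dist_triangle_right y z x
    _ < ε / 2 + ε / 2 := add_lt_add hy hz
    _ = ε := add_halves ε

theorem exists_forall_ge_distLT_of_one_div {P : ℕ → Set (Set X)}
    (hP : ∀ n, ∀ Z ∈ P (n + 1), DistLT (1 / ((n : ℝ) + 1)) Z) {ε : ℝ} (hε : 0 < ε) :
    ∃ N, ∀ n, N ≤ n → ∀ Z ∈ P n, DistLT ε Z := by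
  obtain ⟨N, hN⟩ := exists_nat_one_div_lt hε
  refine ⟨N + 1, fun n hn Z hZ x hx y hy ↦ ?_⟩
  obtain ⟨m, rfl⟩ := Nat.exists_eq_add_of_le' hn
  calc dist x y < 1 / (((m + N : ℕ) : ℝ) + 1) := hP (m + N) Z hZ x hx y hy
    _ ≤ 1 / ((N : ℝ) + 1) := Nat.one_div_le_one_div (Nat.le_add_left N m)
    _ < ε := hN

theorem isTopologicalBasis_iUnion_of_distLT {ι : Sort*} {P : ι → Set (Set X)}
    (hopen : ∀ i, ∀ Z ∈ P i, IsOpen Z) (hcover : ∀ i, IsNhdsCover (P i))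
    (hmesh : ∀ ε > 0, ∃ i, ∀ Z ∈ P i, DistLT ε Z) :
    TopologicalSpace.IsTopologicalBasis (⋃ i, P i) := by
  refine TopologicalSpace.isTopologicalBasis_of_isOpen_of_nhds ?_ fun x U hxU hU ↦ ?_
  · simpa only [mem_iUnion, forall_exists_index] using fun Z i ↦ hopen i Z
  · obtain ⟨ε, hε, hball⟩ := Metric.isOpen_iff.1 hU x hxU
    obtain ⟨i, hi⟩ := hmesh ε hε
    obtain ⟨Z, hZ, hxZ⟩ := hcover i x
    have hxZ : x ∈ Z := mem_of_mem_nhds hxZ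
    exact ⟨Z, mem_iUnion_of_mem i hZ, hxZ, fun y hy ↦ hball (hi Z hZ y hy x hxZ)⟩

end Mesh

section Construction

variable {X Y : Type*}

/-- A clopen partition on whose members `σ` is injective: the invariant of the recursive
construction, as `P^σ` is well behaved for such partitions only. -/
structure IsInjClopenPartition [TopologicalSpace X] (σ : X → Y) (P : Set (Set X)) : Prop where
  isClopenPartition : IsClopenPartition P
  injOn : ∀ Z ∈ P, InjOn σ Z

theorem exists_isInjClopenPartition [TopologicalSpace X] [T2Space X] [CompactSpace X]
    [TotallyDisconnectedSpace X] {σ : X → Y} (hσ : IsLocallyInjective σ) :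
    ∃ P, IsInjClopenPartition σ P := by
  obtain ⟨P, hP, hfiner⟩ := (isNhdsCover_setOf_injOn hσ).exists_isClopenPartition_finer
  exact ⟨P, hP, hfiner.forall_of_antitone (fun _ _ hsub hT ↦ hT.mono hsub) fun _ hT ↦ hT⟩

theorem IsInjClopenPartition.exists_finer [MetricSpace X] [CompactSpace X]
    [TotallyDisconnectedSpace X] {σ : X → X} {P : Set (Set X)} (hP : IsInjClopenPartition σ P)
    (hσ : Continuous σ) (hopen : IsOpenMap σ) (hsurj : Function.Surjective σ) {ε : ℝ}
    (hε : 0 < ε) :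
    ∃ Q, IsInjClopenPartition σ Q ∧ Finer (wedgePart P (sigmaPart σ P)) Q ∧
      Finer (wedgePart P (preimagePart σ P)) Q ∧ ∀ Z ∈ Q, DistLT ε Z := by
  have hcover : IsNhdsCover P := hP.isClopenPartition.isNhdsCover
  have hsigma : IsNhdsCover (sigmaPart σ P) :=
    isNhdsCover_sigmaPart hσ hopen hsurj hP.isClopenPartition hP.injOn
  obtain ⟨Q, hQ, hfiner⟩ :=
    (((hcover.wedgePart hsigma).wedgePart (hcover.wedgePart (hcover.preimagePart hσ))).wedgePart
      (isNhdsCover_setOf_distLT hε)).exists_isClopenPartition_finer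
  have hfiner_sigma : Finer (wedgePart P (sigmaPart σ P)) Q :=
    hfiner.of_wedgePart_left.of_wedgePart_left
  have hinj : ∀ Z ∈ Q, InjOn σ Z :=
    hfiner_sigma.of_wedgePart_left.forall_of_antitone (fun _ _ hsub hT ↦ hT.mono hsub) hP.injOn
  exact ⟨Q, ⟨hQ, hinj⟩, hfiner_sigma, hfiner.of_wedgePart_left.of_wedgePart_right,
    hfiner.of_wedgePart_right.forall_of_antitone (antitone_distLT ε) fun _ hT ↦ hT⟩

end Construction

/-- Every surjective local homeomorphism of a totally disconnected compact metric space
admits a σ-refined sequence of partitions. -/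
theorem stmt6 {X : Type*} [MetricSpace X] [CompactSpace X] [TotallyDisconnectedSpace X]
    (σ : X → X) (hσ : IsLocalHomeomorph σ) (hsurj : Function.Surjective σ) :
    ∃ P : ℕ → Set (Set X), IsSigmaRefinedSeq dist σ P := by
  obtain ⟨P, hP, hstep⟩ := exists_seq_of_forall_exists_rel
    (exists_isInjClopenPartition hσ.isLocallyInjective) fun n _ hP ↦
      hP.exists_finer hσ.continuous hσ.isOpenMap hsurj (Nat.one_div_pos_of_nat (α := ℝ) (n := n))
  have hmesh : ∀ ε > 0, ∃ N, ∀ n, N ≤ n → ∀ Z ∈ P n, DistLT ε Z := fun _ ↦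
    exists_forall_ge_distLT_of_one_div fun n ↦ (hstep n).2.2
  have hbasis : TopologicalSpace.IsTopologicalBasis (⋃ n, P n) :=
    isTopologicalBasis_iUnion_of_distLT
      (fun n Z hZ ↦ ((hP n).isClopenPartition.2.2.1 Z hZ).isOpen)
      (fun n ↦ (hP n).isClopenPartition.isNhdsCover)
      fun ε hε ↦ (hmesh ε hε).imp fun N hN ↦ hN N le_rfl
  exact ⟨P, fun n ↦ (hP n).isClopenPartition, (hP 0).injOn,
    fun n ↦ (hstep n).1.of_wedgePart_left, hbasis.eq_generateFrom, hmesh,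
    fun j ↦ (hstep (2 * j)).1, fun j ↦ (hstep (2 * j + 1)).2.1⟩
end

section
/- Let X be a totally disconnected compact metrizable space, σ : X → X a surjective local homeomorphism, and {P_n}_{n≥0} a σ-refined sequence of partitions of X. Let (m_n)_{n≥0} be a strictly increasing sequence of nonnegative integers with m₀ even and m_{n+1} − m_n odd for every n. Then {P_{m_n}}_{n≥0} is again a σ-refined sequence of partitions of X. -/
open Set

/-! Refinement is transitive along the sequence, so each condition at index `m n` follows from the
one-step condition between `m n` and `m n + 1 ≤ m (n + 1)`, provided `m n` has the parity of `n`.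
For the generated topology, every block of a partition is the union of the blocks of a finer one
that it contains, so `generateFrom (P n)` is antitone in `n` and only the cofinality of `m`
matters. -/

section Refinement

variable {X : Type*} {P Q R : Set (Set X)}

theorem Finer.refl (P : Set (Set X)) : Finer P P :=
  fun Z hZ => ⟨Z, hZ, Subset.rfl⟩

theorem Finer.trans (hPQ : Finer P Q) (hQR : Finer Q R) : Finer P R := by
  intro Z hZ
  obtain ⟨W, hW, hZW⟩ := hQR Z hZ
  obtain ⟨V, hV, hWV⟩ := hPQ W hW
  exact ⟨V, hV, hZW.trans hWV⟩

instance : IsPreorder (Set (Set X)) Finer where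
  refl := Finer.refl
  trans _ _ _ := Finer.trans

theorem Finer.injOn {Y : Type*} {f : X → Y} (hPQ : Finer P Q) (hf : ∀ Z ∈ P, InjOn f Z) :
    ∀ Z ∈ Q, InjOn f Z := by
  intro Z hZ
  obtain ⟨W, hW, hZW⟩ := hPQ Z hZ
  exact (hf W hW).mono hZW

theorem Finer.sUnion_subsets_eq (hPQ : Finer P Q) (hdisj : P.PairwiseDisjoint id)
    (hcover : ⋃₀ Q = univ) {Z : Set X} (hZ : Z ∈ P) : ⋃₀ {W ∈ Q | W ⊆ Z} = Z := by
  refine Subset.antisymm (sUnion_subset fun W hW => hW.2) fun x hx => ?_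
  obtain ⟨W, hW, hxW⟩ : x ∈ ⋃₀ Q := hcover ▸ mem_univ x
  obtain ⟨V, hV, hWV⟩ := hPQ W hW
  have hVZ : V = Z := hdisj.elim_set hV hZ x (hWV hxW) hx
  exact ⟨W, ⟨hW, hVZ ▸ hWV⟩, hxW⟩

theorem Finer.generateFrom_le (hPQ : Finer P Q) (hdisj : P.PairwiseDisjoint id)
    (hcover : ⋃₀ Q = univ) :
    TopologicalSpace.generateFrom Q ≤ TopologicalSpace.generateFrom P := by
  refine le_generateFrom fun Z hZ => ?_
  rw [← hPQ.sUnion_subsets_eq hdisj hcover hZ]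
  exact .sUnion _ fun W hW => .basic W hW.1

end Refinement

section Parity

variable {m : ℕ → ℕ}

theorem strictMono_of_odd_sub (hodd : ∀ n, Odd (m (n + 1) - m n)) : StrictMono m :=
  strictMono_nat_of_lt_succ fun n => Nat.lt_of_sub_pos (hodd n).pos

theorem even_apply_iff_of_odd_sub (h0 : Even (m 0)) (hodd : ∀ n, Odd (m (n + 1) - m n)) (n : ℕ) :
    Even (m n) ↔ Even n := by
  induction n with
  | zero => simp only [h0, Even.zero]
  | succ n ih =>
    have hle : m n ≤ m (n + 1) := (strictMono_of_odd_sub hodd).monotone n.le_succ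
    have hflip : Odd (m (n + 1)) ↔ Even (m n) := (Nat.odd_sub hle).1 (hodd n)
    rw [← Nat.not_odd_iff_even, hflip, ih, Nat.even_add_one]

end Parity

namespace IsSigmaRefinedSeq

variable {X : Type*} [t : TopologicalSpace X] {d : X → X → ℝ} {σ : X → X} {P : ℕ → Set (Set X)}

theorem isClopenPartition (hP : IsSigmaRefinedSeq d σ P) (n : ℕ) : IsClopenPartition (P n) :=
  hP.1 n

theorem finer_of_le (hP : IsSigmaRefinedSeq d σ P) {n k : ℕ} (hnk : n ≤ k) :
    Finer (P n) (P k) :=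
  Nat.rel_of_forall_rel_succ_of_le Finer hP.2.2.1 hnk

theorem injOn (hP : IsSigmaRefinedSeq d σ P) (n : ℕ) : ∀ Z ∈ P n, InjOn σ Z :=
  (hP.finer_of_le n.zero_le).injOn hP.2.1

theorem antitone_generateFrom (hP : IsSigmaRefinedSeq d σ P) :
    Antitone fun n => TopologicalSpace.generateFrom (P n) := by
  intro n k hnk
  obtain ⟨-, -, -, hdisj, -⟩ := hP.isClopenPartition n
  obtain ⟨-, -, -, -, hcover⟩ := hP.isClopenPartition k
  exact (hP.finer_of_le hnk).generateFrom_le hdisj hcover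

theorem eq_generateFrom_comp (hP : IsSigmaRefinedSeq d σ P) {m : ℕ → ℕ}
    (hm : Filter.Tendsto m Filter.atTop Filter.atTop) :
    t = TopologicalSpace.generateFrom (⋃ n, P (m n)) := by
  have hgen : t = TopologicalSpace.generateFrom (⋃ n, P n) := hP.2.2.2.1
  rw [generateFrom_iUnion] at hgen ⊢
  exact hgen.trans (hP.antitone_generateFrom.iInf_comp_tendsto_atTop hm).symm

theorem finer_wedgePart_sigmaPart (hP : IsSigmaRefinedSeq d σ P) {n k : ℕ} (hn : Even n)
    (hnk : n < k) : Finer (wedgePart (P n) (sigmaPart σ (P n))) (P k) := by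
  obtain ⟨j, rfl⟩ := hn.exists_two_nsmul
  exact (hP.2.2.2.2.2.1 j).trans (hP.finer_of_le hnk)

theorem finer_wedgePart_preimagePart (hP : IsSigmaRefinedSeq d σ P) {n k : ℕ} (hn : Odd n)
    (hnk : n < k) : Finer (wedgePart (P n) (preimagePart σ (P n))) (P k) := by
  obtain ⟨j, rfl⟩ := hn
  exact (hP.2.2.2.2.2.2 j).trans (hP.finer_of_le hnk)

end IsSigmaRefinedSeq

theorem stmt7_general {X : Type*} [TopologicalSpace X] {d : X → X → ℝ} {σ : X → X}
    {P : ℕ → Set (Set X)} (hP : IsSigmaRefinedSeq d σ P) {m : ℕ → ℕ} (h0 : Even (m 0))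
    (hodd : ∀ n, Odd (m (n + 1) - m n)) : IsSigmaRefinedSeq d σ (fun n => P (m n)) := by
  have hmono : StrictMono m := strictMono_of_odd_sub hodd
  have hparity : ∀ n, Even (m n) ↔ Even n := even_apply_iff_of_odd_sub h0 hodd
  have hlt : ∀ n, m n < m (n + 1) := fun n => hmono n.lt_succ_self
  refine ⟨fun n => hP.isClopenPartition (m n), hP.injOn (m 0),
    fun n => hP.finer_of_le (hlt n).le, hP.eq_generateFrom_comp hmono.tendsto_atTop,
    fun ε hε => ?diam, fun j => ?sigma, fun j => ?preimage⟩
  case diam =>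
    obtain ⟨N, hN⟩ := hP.2.2.2.2.1 ε hε
    exact ⟨N, fun n hn => hN (m n) (hn.trans hmono.le_apply)⟩
  case sigma =>
    have heven : Even (m (2 * j)) := (hparity _).2 (even_two_mul j)
    exact hP.finer_wedgePart_sigmaPart heven (hlt _)
  case preimage =>
    have hodd_apply : Odd (m (2 * j + 1)) := by
      rw [← Nat.not_even_iff_odd, hparity, Nat.not_even_iff_odd]
      exact odd_two_mul_add_one j
    exact hP.finer_wedgePart_preimagePart hodd_apply (hlt _)

/-- Telescoping a σ-refined sequence of partitions along a strictly increasing sequence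
`(m n)` with `m 0` even and all successive differences odd yields again a σ-refined
sequence of partitions. -/
theorem stmt7 {X : Type*} [MetricSpace X] [CompactSpace X] [TotallyDisconnectedSpace X]
    (σ : X → X) (hσ : IsLocalHomeomorph σ) (hsurj : Function.Surjective σ)
    (P : ℕ → Set (Set X)) (hP : IsSigmaRefinedSeq dist σ P)
    (m : ℕ → ℕ) (hmono : StrictMono m) (h0 : Even (m 0))
    (hodd : ∀ n, Odd (m (n + 1) - m n)) :
    IsSigmaRefinedSeq dist σ (fun n => P (m n)) := by
  exact stmt7_general hP h0 hodd
end

section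
/- Let X be a totally disconnected compact metrizable space and σ : X → X a surjective local homeomorphism. Then (X,σ) admits a σ-cylinder decomposition. -/
/-!
By local injectivity and compactness, `X` splits into finitely many clopen sets `U₁, …, Uₙ` on each
of which `σ` is injective. The images `σ(Uⱼ)` are clopen too, so the atoms of the Boolean algebra
generated by all `Uⱼ` and `σ(Uⱼ)` form a finite clopen partition `{Z_γ}` of `X`. Each `Uᵢ` is a
union of atoms, and an atom either misses `σ(Uᵢ)` or lies inside it; the sets `Uᵢ ∩ σ⁻¹(Z_γ)` with
`Z_γ ⊆ σ(Uᵢ)` therefore partition `Uᵢ` and are mapped bijectively onto the `Z_γ`. In particular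
`a_{γ,i} ∈ {0, 1}`. Clopen partitions are handled as locally constant maps to a finite type.
-/

open Set TopologicalSpace

section Partition

variable {X Y ι : Type*} [TopologicalSpace X] [CompactSpace X] [T2Space X]
  [TotallyDisconnectedSpace X]

theorem exists_isLocallyConstant_fiber_subset {U : ι → Opens X} (hU : IsOpenCover U) :
    ∃ (n : ℕ) (u : X → Fin n), IsLocallyConstant u ∧ Function.Surjective u ∧
      ∀ j, ∃ i, u ⁻¹' {j} ⊆ U i := by
  obtain ⟨n, W, hW, hcover, hdisj⟩ := hU.exists_finite_nonempty_disjoint_clopen_cover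
  choose u hu using fun x => mem_iUnion.mp (hcover (mem_univ x))
  have eq_of_mem {x : X} {j : Fin n} (hx : x ∈ W j) : u x = j := by
    by_contra hne
    exact disjoint_left.mp (Clopens.coe_disjoint.mpr (hdisj hne)) (hu x) hx
  have fiber_eq (j : Fin n) : u ⁻¹' {j} = W j :=
    Subset.antisymm (fun x hx => by rw [← mem_singleton_iff.mp hx]; exact hu x)
      fun x hx => eq_of_mem hx
  refine ⟨n, u, IsLocallyConstant.iff_isOpen_fiber.mpr fun j => ?_, fun j => ?_, fun j => ?_⟩
  · rw [fiber_eq]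
    exact (W j).isOpen
  · obtain ⟨x, hx⟩ := nonempty_iff_ne_empty.mpr (SetLike.coe_ne_coe.mpr (hW j).1)
    exact ⟨x, eq_of_mem hx⟩
  · rw [fiber_eq]
    exact (hW j).2

theorem exists_isLocallyConstant_injOn_fiber {f : X → Y} (hf : IsLocallyInjective f) :
    ∃ (n : ℕ) (u : X → Fin n), IsLocallyConstant u ∧ Function.Surjective u ∧
      ∀ i, InjOn f (u ⁻¹' {i}) := by
  choose U hUo hxU hUinj using hf
  have hcover : IsOpenCover fun x => (⟨U x, hUo x⟩ : Opens X) :=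
    IsOpenCover.of_sets hUo (iUnion_eq_univ_iff.mpr fun x => ⟨x, hxU x⟩)
  obtain ⟨n, u, hu, husurj, hsub⟩ := exists_isLocallyConstant_fiber_subset hcover
  refine ⟨n, u, hu, husurj, fun i => ?_⟩
  obtain ⟨x, hx⟩ := hsub i
  exact (hUinj x).mono hx

end Partition

section Labels

variable {X Y ι : Type*}

/-- The set of labels, with respect to a labelling `u` of `X`, of the points of the fibre of `f`
over `y`. Thus `i ∈ preimageLabels f u y` says that `y` lies in the image of the `i`-th piece. -/
def preimageLabels (f : X → Y) (u : X → ι) (y : Y) : Set ι :=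
  u '' (f ⁻¹' {y})

theorem mem_preimageLabels_iff {f : X → Y} {u : X → ι} {y : Y} {i : ι} :
    i ∈ preimageLabels f u y ↔ y ∈ f '' (u ⁻¹' {i}) :=
  exists_congr fun _ => and_comm

theorem isLocallyConstant_of_isClopen_mem [TopologicalSpace Y] [Finite ι] {s : Y → Set ι}
    (hs : ∀ i, IsClopen {y | i ∈ s y}) : IsLocallyConstant s := by
  refine (IsLocallyConstant.iff_eventually_eq s).mpr fun y => ?_
  have eventually_mem_iff (i : ι) : ∀ᶠ z in nhds y, i ∈ s z ↔ i ∈ s y := by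
    by_cases hi : i ∈ s y
    · filter_upwards [(hs i).isOpen.mem_nhds hi] with z hz using iff_of_true hz hi
    · filter_upwards [(hs i).compl.isOpen.mem_nhds hi] with z hz using iff_of_false hz hi
  filter_upwards [Filter.eventually_all.mpr eventually_mem_iff] with z hz using Set.ext hz

theorem isLocallyConstant_preimageLabels [TopologicalSpace X] [TopologicalSpace Y] [Finite ι]
    {f : X → Y} {u : X → ι} (hopen : IsOpenMap f) (hclosed : IsClosedMap f)
    (hu : IsLocallyConstant u) : IsLocallyConstant (preimageLabels f u) := by
  refine isLocallyConstant_of_isClopen_mem fun i => ?_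
  simp only [mem_preimageLabels_iff]
  exact ⟨hclosed _ (hu.isClosed_fiber i), hopen _ (hu.isOpen_fiber i)⟩

end Labels

section Cylinder

variable {X ι : Type*} (σ : X → X) (u : X → ι)

/-- The label of the atom containing `x` in the Boolean algebra generated by the pieces `u ⁻¹' {i}`
and their images under `σ`: it records the piece containing `x` and the images containing `x`. -/
def cylinderCode (x : X) : ι × Set ι :=
  (u x, preimageLabels σ u x)

/-- The atom `Z_γ` with label `γ`. -/
def cylinderCell (γ : ι × Set ι) : Set X :=
  cylinderCode σ u ⁻¹' {γ}

/-- The part of the `i`-th piece that `σ` maps into the atom `Z_γ`; it plays the role of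
`V_{γ,i}^{(1)}` when `i ∈ γ.2`, and is empty otherwise. -/
def cylinderBranch (γ : ι × Set ι) (i : ι) : Set X :=
  u ⁻¹' {i} ∩ σ ⁻¹' cylinderCell σ u γ

open Classical in
/-- The number `a_{γ,i}` of branches over `Z_γ` in the `i`-th piece: one if `Z_γ` lies in the image
of that piece, and zero otherwise. -/
noncomputable def cylinderMultiplicity (γ : ι × Set ι) (i : ι) : ℕ :=
  if i ∈ γ.2 then 1 else 0

theorem nonempty_fin_cylinderMultiplicity_iff {γ : ι × Set ι} {i : ι} :
    Nonempty (Fin (cylinderMultiplicity γ i)) ↔ i ∈ γ.2 := by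
  rw [← Fin.pos_iff_nonempty]
  unfold cylinderMultiplicity
  split_ifs with hi <;> simp [hi]

theorem fin_cylinderMultiplicity_val_eq_zero {γ : ι × Set ι} {i : ι}
    (k : Fin (cylinderMultiplicity γ i)) : (k : ℕ) = 0 := by
  have cylinderMultiplicity_le_one : cylinderMultiplicity γ i ≤ 1 := by
    unfold cylinderMultiplicity
    split_ifs <;> simp
  lia

variable {σ u}

theorem pairwise_disjoint_cylinderCell :
    Pairwise fun γ γ' => Disjoint (cylinderCell σ u γ) (cylinderCell σ u γ') :=
  pairwise_disjoint_fiber (cylinderCode σ u)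

theorem pairwise_disjoint_cylinderBranch (i : ι) :
    Pairwise fun γ γ' => Disjoint (cylinderBranch σ u γ i) (cylinderBranch σ u γ' i) :=
  fun _ _ hne => ((pairwise_disjoint_cylinderCell hne).preimage σ).mono
    inter_subset_right inter_subset_right

theorem image_cylinderBranch {γ : ι × Set ι} {i : ι} (hi : i ∈ γ.2) :
    σ '' cylinderBranch σ u γ i = cylinderCell σ u γ := by
  have cell_subset_image : cylinderCell σ u γ ⊆ σ '' (u ⁻¹' {i}) := by
    rintro y rfl
    exact mem_preimageLabels_iff.mp hi
  rw [cylinderBranch, image_inter_preimage, inter_eq_right.mpr cell_subset_image]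

theorem iUnion_cylinderCell_eq_univ :
    (⋃ γ : range (cylinderCode σ u), cylinderCell σ u γ) = univ :=
  iUnion_eq_univ_iff.mpr fun x => ⟨⟨_, x, rfl⟩, rfl⟩

theorem iUnion_cylinderCell_eq_fiber (i : ι) :
    (⋃ γ ∈ {γ : range (cylinderCode σ u) | γ.1.1 = i}, cylinderCell σ u γ) = u ⁻¹' {i} := by
  refine Subset.antisymm (iUnion₂_subset ?_) fun x hx => mem_iUnion₂.mpr ⟨⟨_, x, rfl⟩, hx, rfl⟩
  rintro γ hγ x hx
  exact (congrArg Prod.fst hx).trans hγ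

theorem iUnion_cylinderBranch_eq_fiber (i : ι) :
    (⋃ γ : range (cylinderCode σ u), ⋃ _ : Fin (cylinderMultiplicity γ.1 i),
      cylinderBranch σ u γ i) = u ⁻¹' {i} := by
  refine Subset.antisymm (iUnion₂_subset fun _ _ => inter_subset_left) fun x hx => ?_
  have label_mem : i ∈ (cylinderCode σ u (σ x)).2 := ⟨x, rfl, hx⟩
  obtain ⟨k⟩ := nonempty_fin_cylinderMultiplicity_iff.mpr label_mem
  exact mem_iUnion₂.mpr ⟨⟨_, σ x, rfl⟩, k, hx, rfl⟩

variable [TopologicalSpace X] [Finite ι]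

theorem isClopen_cylinderCell (hopen : IsOpenMap σ) (hclosed : IsClosedMap σ)
    (hu : IsLocallyConstant u) (γ : ι × Set ι) : IsClopen (cylinderCell σ u γ) :=
  (hu.prodMk (isLocallyConstant_preimageLabels hopen hclosed hu)).isClopen_fiber γ

theorem isClopen_cylinderBranch (hcont : Continuous σ) (hopen : IsOpenMap σ)
    (hclosed : IsClosedMap σ) (hu : IsLocallyConstant u) (γ : ι × Set ι) (i : ι) :
    IsClopen (cylinderBranch σ u γ i) :=
  (hu.isClopen_fiber i).inter ((isClopen_cylinderCell hopen hclosed hu γ).preimage hcont)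

end Cylinder

theorem stmt14_general {X : Type*} [TopologicalSpace X] [CompactSpace X]
    [T2Space X] [TotallyDisconnectedSpace X] (σ : X → X) (hσ : IsLocalHomeomorph σ) :
    ∃ (n : ℕ) (Γ : Type) (_ : Fintype Γ) (ι : Γ → Fin n) (Z : Γ → Set X)
      (a : Γ → Fin n → ℕ) (V : (γ : Γ) → (i : Fin n) → Fin (a γ i) → Set X),
      Function.Surjective ι ∧
      (∀ γ, (Z γ).Nonempty ∧ IsCompact (Z γ) ∧ IsOpen (Z γ)) ∧
      Pairwise (fun γ γ' => Disjoint (Z γ) (Z γ')) ∧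
      (⋃ γ, Z γ) = Set.univ ∧
      (∀ γ i k, (V γ i k).Nonempty ∧ IsCompact (V γ i k) ∧ IsOpen (V γ i k)) ∧
      (∀ i : Fin n, (⋃ γ ∈ {γ | ι γ = i}, Z γ) = ⋃ γ, ⋃ k, V γ i k) ∧
      (∀ (i : Fin n) (γ γ' : Γ) (k : Fin (a γ i)) (k' : Fin (a γ' i)),
        (γ, (k : ℕ)) ≠ (γ', (k' : ℕ)) → Disjoint (V γ i k) (V γ' i k')) ∧
      (∀ γ i k, Set.InjOn σ (V γ i k) ∧ σ '' V γ i k = Z γ) := by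
  obtain ⟨n, u, hu, husurj, huinj⟩ := exists_isLocallyConstant_injOn_fiber hσ.isLocallyInjective
  have hclosed : IsClosedMap σ := hσ.continuous.isClosedMap
  have cell_clopen := isClopen_cylinderCell hσ.isOpenMap hclosed hu
  have branch_clopen := isClopen_cylinderBranch hσ.continuous hσ.isOpenMap hclosed hu
  have cell_nonempty (γ : range (cylinderCode σ u)) : (cylinderCell σ u γ).Nonempty := γ.2
  have branch_image {γ : Fin n × Set (Fin n)} {i : Fin n} (k : Fin (cylinderMultiplicity γ i)) :
      σ '' cylinderBranch σ u γ i = cylinderCell σ u γ :=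
    image_cylinderBranch (nonempty_fin_cylinderMultiplicity_iff.mp ⟨k⟩)
  refine ⟨n, range (cylinderCode σ u), Fintype.ofFinite _, fun γ => γ.1.1,
    fun γ => cylinderCell σ u γ, fun γ i => cylinderMultiplicity γ.1 i,
    fun γ i _ => cylinderBranch σ u γ i, fun i => ?_,
    fun γ => ⟨cell_nonempty γ, (cell_clopen γ).isClosed.isCompact, (cell_clopen γ).isOpen⟩,
    fun γ γ' hne => pairwise_disjoint_cylinderCell (Subtype.coe_ne_coe.mpr hne),
    iUnion_cylinderCell_eq_univ,
    fun γ i k => ⟨(branch_image k ▸ cell_nonempty γ).of_image,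
      (branch_clopen γ i).isClosed.isCompact, (branch_clopen γ i).isOpen⟩,
    fun i => (iUnion_cylinderCell_eq_fiber i).trans (iUnion_cylinderBranch_eq_fiber i).symm,
    fun i γ γ' k k' hne => pairwise_disjoint_cylinderBranch i fun hγ => hne ?_,
    fun γ i k => ⟨(huinj i).mono inter_subset_left, branch_image k⟩⟩
  · obtain ⟨x, hx⟩ := husurj i
    exact ⟨⟨_, x, rfl⟩, hx⟩
  · exact Prod.ext (Subtype.ext hγ) ((fin_cylinderMultiplicity_val_eq_zero k).trans
      (fin_cylinderMultiplicity_val_eq_zero k').symm)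

/-- Every surjective local homeomorphism `σ` of a totally disconnected compact metrizable
space `X` admits a σ-cylinder decomposition: a finite index set `Γ` partitioned into `n`
nonempty pieces (encoded by a surjection `ι : Γ → Fin n`), nonempty pairwise disjoint
compact open sets `Z γ` covering `X`, and nonempty compact open sets `V γ i k`
(`k < a γ i`) such that `V i := ⋃_{ι γ = i} Z γ` decomposes as the disjoint union of the
`V γ i k`, and `σ` restricts to an injection of `V γ i k` onto `Z γ`. -/
theorem stmt14 {X : Type*} [TopologicalSpace X] [CompactSpace X]
    [TopologicalSpace.MetrizableSpace X] [TotallyDisconnectedSpace X]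
    (σ : X → X) (hσ : IsLocalHomeomorph σ) (hsurj : Function.Surjective σ) :
    ∃ (n : ℕ) (Γ : Type) (_ : Fintype Γ) (ι : Γ → Fin n) (Z : Γ → Set X)
      (a : Γ → Fin n → ℕ) (V : (γ : Γ) → (i : Fin n) → Fin (a γ i) → Set X),
      Function.Surjective ι ∧
      (∀ γ, (Z γ).Nonempty ∧ IsCompact (Z γ) ∧ IsOpen (Z γ)) ∧
      Pairwise (fun γ γ' => Disjoint (Z γ) (Z γ')) ∧
      (⋃ γ, Z γ) = Set.univ ∧
      (∀ γ i k, (V γ i k).Nonempty ∧ IsCompact (V γ i k) ∧ IsOpen (V γ i k)) ∧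
      (∀ i : Fin n, (⋃ γ ∈ {γ | ι γ = i}, Z γ) = ⋃ γ, ⋃ k, V γ i k) ∧
      (∀ (i : Fin n) (γ γ' : Γ) (k : Fin (a γ i)) (k' : Fin (a γ' i)),
        (γ, (k : ℕ)) ≠ (γ', (k' : ℕ)) → Disjoint (V γ i k) (V γ' i k')) ∧
      (∀ γ i k, Set.InjOn σ (V γ i k) ∧ σ '' V γ i k = Z γ) := stmt14_general σ hσ
end

section
/- Let X be a totally disconnected compact metrizable space and σ : X → X a surjective local homeomorphism. Then σ is a covering map: every point of X has an open neighborhood U such that σ⁻¹(U) is a disjoint union of open subsets of X, each of which is mapped homeomorphically onto U by σ. -/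
/-!
A continuous map from a compact space to a Hausdorff space is proper. A fibre of a proper local
homeomorphism is compact and discrete, hence finite. Since the map is closed, a neighborhood of the
fibre contains the preimage of a neighborhood of the point, and shrinking the latter to the common
image of finitely many disjoint charts gives an evenly covered neighborhood `U`. The sheets over `U`
are the images of the sections `z ↦ H.symm (z, i)`, where `H` trivializes the map over `U`.
-/

open Function Set Topology

theorem isOpenEmbedding_prodMkLeft {Y I : Type*} [TopologicalSpace Y] [TopologicalSpace I]
    [DiscreteTopology I] (i : I) : IsOpenEmbedding fun y : Y => (y, i) where
  toIsEmbedding := isEmbedding_prodMkLeft i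
  isOpen_range := by
    have range_eq : range (fun y : Y => (y, i)) = Prod.snd ⁻¹' {i} := by ext ⟨y, j⟩; simp [eq_comm]
    rw [range_eq]
    exact (isOpen_discrete {i}).preimage continuous_snd

section Sheets

variable {E X : Type*} [TopologicalSpace E] [TopologicalSpace X] {f : E → X}

theorem exists_openPartialHomeomorph_of_isOpenEmbedding_section {U : TopologicalSpace.Opens X}
    [Nonempty U] {s : U → E} (hs : IsOpenEmbedding s) (hfs : ∀ z, f (s z) = z) :
    ∃ e : OpenPartialHomeomorph E X, e.source = range s ∧ e.target = U ∧ EqOn f e e.source := by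
  let chart := hs.toOpenPartialHomeomorph s
  refine ⟨chart.symm.trans (U.openPartialHomeomorphSubtypeCoe ‹_›), by simp [chart],
    by simp [chart], ?_⟩
  rintro x ⟨hx, -⟩
  calc f x = f (s (chart.symm x)) := congrArg f (chart.right_inv hx).symm
    _ = chart.symm x := hfs _

theorem exists_sheets_of_isEvenlyCovered {I : Type*} [TopologicalSpace I] {x : X}
    (h : IsEvenlyCovered f x I) :
    ∃ U : Set X, IsOpen U ∧ x ∈ U ∧ ∃ e : I → OpenPartialHomeomorph E X,
      Pairwise (Disjoint on fun i => (e i).source) ∧ f ⁻¹' U = ⋃ i, (e i).source ∧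
      ∀ i, (e i).target = U ∧ EqOn f (e i) (e i).source := by
  obtain ⟨_, U, hxU, hU, hfU, H, hH⟩ := h
  let V : TopologicalSpace.Opens X := ⟨U, hU⟩
  have : Nonempty V := ⟨⟨x, hxU⟩⟩
  let sheetSection (i : I) (z : V) : E := H.symm (z, i)
  have isOpenEmbedding_sheetSection (i : I) : IsOpenEmbedding (sheetSection i) :=
    hfU.isOpenEmbedding_subtypeVal.comp <| H.symm.isOpenEmbedding.comp <|
      isOpenEmbedding_prodMkLeft i
  have apply_sheetSection (i : I) (z : V) : f (sheetSection i z) = z := by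
    rw [← hH, H.apply_symm_apply]
  choose e source_eq target_eq eqOn using fun i =>
    exists_openPartialHomeomorph_of_isOpenEmbedding_section
      (isOpenEmbedding_sheetSection i) (apply_sheetSection i)
  refine ⟨U, hU, hxU, e, fun i j hij => ?_, ?_, fun i => ⟨target_eq i, eqOn i⟩⟩
  · simp only [onFun, source_eq]
    refine disjoint_range_iff.mpr fun z w hzw => hij ?_
    exact congrArg Prod.snd (H.symm.injective (Subtype.ext hzw))
  · simp only [source_eq]
    refine Subset.antisymm (fun a ha => ?_) (iUnion_subset fun i => ?_)
    · exact mem_iUnion.mpr ⟨(H ⟨a, ha⟩).2, (H ⟨a, ha⟩).1, by simp [sheetSection]⟩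
    · exact range_subset_iff.mpr fun z => (H.symm (z, i)).2

theorem finite_fiber_of_isLocalHomeomorph_of_isProperMap (hf : IsLocalHomeomorph f)
    (hproper : IsProperMap f) (x : X) : (f ⁻¹' {x}).Finite :=
  (hproper.isCompact_preimage isCompact_singleton).finite <|
    .of_openPartialHomeomorph f Subset.rfl fun e _ => (hf e).imp fun _ h => ⟨h.1, h.2.symm⟩

theorem exists_isEvenlyCovered_fin_of_isLocalHomeomorph_of_isProperMap [T2Space E]
    (hf : IsLocalHomeomorph f) (hproper : IsProperMap f) (x : X) :
    ∃ n : ℕ, IsEvenlyCovered f x (Fin n) := by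
  have finite_fiber := finite_fiber_of_isLocalHomeomorph_of_isProperMap hf hproper
  have covered : IsEvenlyCovered f x (f ⁻¹' {x}) :=
    hproper.isClosedMap.isCoveringMapOn_of_isLocalHomeomorphOn (s := univ)
      (fun y _ => finite_fiber y) hf.isLocalHomeomorphOn x (mem_univ x)
  have : Finite (f ⁻¹' {x}) := finite_fiber x
  have : DiscreteTopology (f ⁻¹' {x}) := covered.1
  obtain ⟨n, ⟨k⟩⟩ := Finite.exists_equiv_fin (f ⁻¹' {x})
  exact ⟨n, covered.of_fiber_homeomorph k.toHomeomorphOfDiscrete⟩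

theorem stmt15_general [T2Space E] (hf : IsLocalHomeomorph f) (hproper : IsProperMap f) (x : X) :
    ∃ U : Set X, IsOpen U ∧ x ∈ U ∧ ∃ (n : ℕ) (e : Fin n → OpenPartialHomeomorph E X),
      Pairwise (Disjoint on fun i => (e i).source) ∧ f ⁻¹' U = ⋃ i, (e i).source ∧
      ∀ i, (e i).target = U ∧ EqOn f (e i) (e i).source := by
  obtain ⟨n, covered⟩ :=
    exists_isEvenlyCovered_fin_of_isLocalHomeomorph_of_isProperMap hf hproper x
  obtain ⟨U, hU, hxU, sheets⟩ := exists_sheets_of_isEvenlyCovered covered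
  exact ⟨U, hU, hxU, n, sheets⟩

end Sheets

/-- Every surjective local homeomorphism `σ` of a totally disconnected compact metrizable
space is a covering map: every point has an open neighborhood `U` whose preimage is a
disjoint union of open sets, each of which is mapped homeomorphically onto `U` by `σ`. -/
theorem stmt15 {X : Type*} [TopologicalSpace X] [CompactSpace X]
    [TopologicalSpace.MetrizableSpace X] [TotallyDisconnectedSpace X]
    (σ : X → X) (hσ : IsLocalHomeomorph σ) (hsurj : Function.Surjective σ) :
    ∀ y : X, ∃ U : Set X, IsOpen U ∧ y ∈ U ∧
      ∃ (ι : Type) (W : ι → Set X),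
        (∀ i, IsOpen (W i)) ∧
        Pairwise (fun i j => Disjoint (W i) (W j)) ∧
        σ ⁻¹' U = ⋃ i, W i ∧
        ∀ i, ∃ e : PartialHomeomorph X X,
          e.source = W i ∧ e.target = U ∧ Set.EqOn σ ⇑e (W i) := by
  intro y
  obtain ⟨U, hU, hyU, n, e, disjoint, preimage_eq, he⟩ :=
    stmt15_general hσ hσ.continuous.isProperMap y
  exact ⟨U, hU, hyU, Fin n, fun i => (e i).source, fun i => (e i).open_source, disjoint,
    preimage_eq, fun i => ⟨(e i).toPartialHomeomorph, rfl, he i⟩⟩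
end
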